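/- Hitting probability versus exit probability: let λ ≥ 1, suppose R_eff(0, B(0,R)^c) ≥ R/λ and let 0 < ε ≤ 1/(2λ). Then for every y ∈ B(0,εR), the simple random walk started at y hits 0 before exiting B(0,R) with probability at least 1 − ελ/(1−ελ) ≥ 1 − 2ελ; and started at 0 it hits y before exiting B(0,R) with probability at least 1 − ελ. -/

import Mathlib

open scoped ENNReal

attribute [local instance] Classical.propDecidable

variable {V : Type*}

/-- Dirichlet energy (with values in `ℝ≥0∞`) of a function on the vertices of a graph,
with unit resistors on the edges: `E(f,f) = (1/2) ∑_{x∼y} (f x - f y)^2`. -/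
noncomputable def eEnergy (G : SimpleGraph V) (f : V → ℝ) : ℝ≥0∞ :=
  2⁻¹ * ∑' e : {p : V × V // G.Adj p.1 p.2}, ENNReal.ofReal ((f e.val.1 - f e.val.2) ^ 2)

/-- Effective resistance between two sets of vertices, defined variationally:
`Reff(A,B)⁻¹ = inf { E(f,f) : f|_A = 1, f|_B = 0 }`. -/
noncomputable def effRes (G : SimpleGraph V) (A B : Set V) : ℝ≥0∞ :=
  (⨅ f ∈ {f : V → ℝ | (∀ a ∈ A, f a = 1) ∧ (∀ b ∈ B, f b = 0)}, eEnergy G f)⁻¹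

/-- Degree of a vertex. -/
noncomputable def vdeg (G : SimpleGraph V) (x : V) : ℕ := (G.neighborSet x).ncard

/-- One-step transition probability of the simple random walk:
`P^x(X_1 = y) = 1/μ_x` for `y ∼ x`, and `0` otherwise. -/
noncomputable def stepP (G : SimpleGraph V) (x y : V) : ℝ :=
  (G.neighborSet x).indicator (fun _ => ((vdeg G x : ℝ))⁻¹) y

/-- `walkP G n x y = P^x(X_n = y)`, the `n`-step transition probability. -/
noncomputable def walkP (G : SimpleGraph V) : ℕ → V → V → ℝ
  | 0, x, y => if x = y then 1 else 0
  | n + 1, x, y => ∑' z : V, stepP G x z * walkP G n z y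

/-- The heat kernel `p_n(x,y) = P^x(X_n = y)/μ_y`. -/
noncomputable def hkP (G : SimpleGraph V) (n : ℕ) (x y : V) : ℝ :=
  walkP G n x y / (vdeg G y : ℝ)

/-- `killedP G B n x y = P^x(X_n = y, n < τ_B)`, the transition probability of the walk
killed upon exiting `B` (the path stays in `B` up to and including time `n`). -/
noncomputable def killedP (G : SimpleGraph V) (B : Set V) : ℕ → V → V → ℝ
  | 0, x, y => if x = y ∧ x ∈ B then 1 else 0
  | n + 1, x, y => ∑' z : V, B.indicator (fun w => stepP G w z) x * killedP G B n z y

/-- `exitTail G B x n = P^x(τ_B > n)`, the tail of the exit time of `B`. -/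
noncomputable def exitTail (G : SimpleGraph V) (B : Set V) (x : V) (n : ℕ) : ℝ :=
  ∑' y : V, killedP G B n x y

/-- `meanExit G B x = E^x τ_B`, the mean exit time of `B`. -/
noncomputable def meanExit (G : SimpleGraph V) (B : Set V) (x : V) : ℝ :=
  ∑' n : ℕ, exitTail G B x n

/-- `firstHitP G B y n x = P^x(T_y = n, n < τ_B)`: the probability that the walk started
at `x` first hits `y` at time `n`, before exiting `B`. -/
noncomputable def firstHitP (G : SimpleGraph V) (B : Set V) (y : V) : ℕ → V → ℝ
  | 0, x => if x = y ∧ x ∈ B then 1 else 0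
  | n + 1, x => ∑' z : V, (B \ {y}).indicator (fun w => stepP G w z) x * firstHitP G B y n z

/-- The Green kernel of the walk killed on exiting `B`:
`g_B(x,y) = μ_y⁻¹ ∑_{k≥0} P^x(X_k = y, k < τ_B)`. -/
noncomputable def greenB (G : SimpleGraph V) (B : Set V) (x y : V) : ℝ :=
  (∑' n : ℕ, killedP G B n x y) / (vdeg G y : ℝ)


lemma hbe_ball_finite (G : SimpleGraph V) (hconn : G.Connected)
    (hlf : ∀ v : V, (G.neighborSet v).Finite) (v₀ : V) (n : ℕ) :
    {z : V | G.dist z v₀ ≤ n}.Finite := by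
  induction n with
  | zero =>
    refine (Set.finite_singleton v₀).subset ?_
    intro z hz
    have : G.dist z v₀ = 0 := by simpa using hz
    exact (hconn.dist_eq_zero_iff).1 this
  | succ n ih =>
    refine ((ih.biUnion (fun x _ => hlf x)).union (Set.finite_singleton v₀)).subset ?_
    intro z hz
    obtain ⟨p, hp⟩ := hconn.exists_walk_length_eq_dist z v₀
    have hz' : G.dist z v₀ ≤ n + 1 := hz
    cases p with
    | nil => right; rfl
    | cons h p' =>
      rename_i w
      left
      rw [SimpleGraph.Walk.length_cons] at hp
      have h2 := SimpleGraph.dist_le p'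
      refine Set.mem_biUnion (x := w) ?_ ?_
      · change G.dist w v₀ ≤ n
        omega
      · exact h.symm

lemma hbe_step (G : SimpleGraph V) (hlf : ∀ v : V, (G.neighborSet v).Finite)
    (x : V) (f : V → ℝ) :
    ∑' z : V, stepP G x z * f z = (vdeg G x : ℝ)⁻¹ * ∑ z ∈ (hlf x).toFinset, f z := by
  rw [tsum_eq_sum (s := (hlf x).toFinset)]
  · rw [Finset.mul_sum]
    refine Finset.sum_congr rfl fun z hz => ?_
    have : z ∈ G.neighborSet x := by simpa using hz
    rw [stepP, Set.indicator_of_mem this]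
  · intro z hz
    have : z ∉ G.neighborSet x := by simpa using hz
    rw [stepP, Set.indicator_of_notMem this, zero_mul]

lemma hbe_succ (G : SimpleGraph V) (hlf : ∀ v : V, (G.neighborSet v).Finite)
    (B : Set V) (y : V) (n : ℕ) (x : V) (hx : x ∈ B) (hxy : x ≠ y) :
    firstHitP G B y (n + 1) x
      = (vdeg G x : ℝ)⁻¹ * ∑ z ∈ (hlf x).toFinset, firstHitP G B y n z := by
  rw [← hbe_step G hlf x, firstHitP]
  have : x ∈ B \ {y} := ⟨hx, hxy⟩
  simp only [Set.indicator_of_mem this]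

lemma hbe_succ' (G : SimpleGraph V)
    (B : Set V) (y : V) (n : ℕ) (x : V) (hx : x ∉ B \ {y}) :
    firstHitP G B y (n + 1) x = 0 := by
  rw [firstHitP]
  simp only [Set.indicator_of_notMem hx, zero_mul, tsum_zero]

lemma hbe_nonneg (G : SimpleGraph V) (hlf : ∀ v : V, (G.neighborSet v).Finite)
    (B : Set V) (y : V) (n : ℕ) : ∀ x : V, 0 ≤ firstHitP G B y n x := by
  induction n with
  | zero => intro x; rw [firstHitP]; split_ifs <;> norm_num
  | succ n ih =>
    intro x
    by_cases hx : x ∈ B \ {y}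
    · rw [hbe_succ G hlf B y n x hx.1 hx.2]
      exact mul_nonneg (by positivity) (Finset.sum_nonneg fun z _ => ih z)
    · rw [hbe_succ' G B y n x hx]

lemma hbe_card (G : SimpleGraph V) (hlf : ∀ v : V, (G.neighborSet v).Finite) (x : V) :
    (hlf x).toFinset.card = vdeg G x := by
  rw [vdeg, Set.ncard_eq_toFinset_card _ (hlf x)]

lemma hbe_partial (G : SimpleGraph V) (hlf : ∀ v : V, (G.neighborSet v).Finite)
    (B : Set V) (y : V) (n : ℕ) :
    ∀ x : V, ∑ k ∈ Finset.range n, firstHitP G B y k x ≤ 1 := by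
  induction n with
  | zero => intro x; simp
  | succ n ih =>
    intro x
    rw [Finset.sum_range_succ']
    by_cases hx : x ∈ B \ {y}
    · have h0 : firstHitP G B y 0 x = 0 := by
        rw [firstHitP, if_neg]; rintro ⟨h, _⟩; exact hx.2 h
      simp only [hbe_succ G hlf B y _ x hx.1 hx.2, h0, add_zero]
      rw [← Finset.mul_sum, Finset.sum_comm]
      have h1 : ∑ z ∈ (hlf x).toFinset, ∑ k ∈ Finset.range n, firstHitP G B y k z
          ≤ (vdeg G x : ℝ) := by
        refine (Finset.sum_le_sum fun z _ => ih z).trans ?_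
        simp [← hbe_card G hlf x]
      calc _ ≤ (vdeg G x : ℝ)⁻¹ * (vdeg G x : ℝ) := by gcongr
        _ ≤ 1 := inv_mul_le_one
    · simp only [hbe_succ' G B y _ x hx, Finset.sum_const_zero, zero_add]
      rw [firstHitP]; split_ifs <;> norm_num

lemma hbe_summable (G : SimpleGraph V) (hlf : ∀ v : V, (G.neighborSet v).Finite)
    (B : Set V) (y x : V) : Summable fun k => firstHitP G B y k x :=
  summable_of_sum_range_le (fun k => hbe_nonneg G hlf B y k x)
    (fun n => hbe_partial G hlf B y n x)

/-- the hitting probability -/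
noncomputable def hbeU (G : SimpleGraph V) (B : Set V) (y x : V) : ℝ :=
  ∑' k : ℕ, firstHitP G B y k x

lemma hbeU_nonneg (G : SimpleGraph V) (hlf : ∀ v : V, (G.neighborSet v).Finite)
    (B : Set V) (y x : V) : 0 ≤ hbeU G B y x :=
  tsum_nonneg fun k => hbe_nonneg G hlf B y k x

lemma hbeU_le_one (G : SimpleGraph V) (hlf : ∀ v : V, (G.neighborSet v).Finite)
    (B : Set V) (y x : V) : hbeU G B y x ≤ 1 :=
  Real.tsum_le_of_sum_range_le (fun k => hbe_nonneg G hlf B y k x)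
    (fun n => hbe_partial G hlf B y n x)

lemma hbeU_self (G : SimpleGraph V) (hlf : ∀ v : V, (G.neighborSet v).Finite)
    (B : Set V) (y : V) (hy : y ∈ B) : hbeU G B y y = 1 := by
  rw [hbeU, (hbe_summable G hlf B y y).tsum_eq_zero_add]
  have : y ∉ B \ {y} := fun h => h.2 rfl
  simp only [hbe_succ' G B y _ y this, tsum_zero, add_zero]
  simp [firstHitP, hy]

lemma hbeU_off (G : SimpleGraph V) 
    (B : Set V) (y x : V) (hx : x ∉ B) : hbeU G B y x = 0 := by
  have : ∀ k, firstHitP G B y k x = 0 := by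
    intro k
    cases k with
    | zero => simp [firstHitP, hx]
    | succ n => exact hbe_succ' G B y n x fun h => hx h.1
  simp [hbeU, this]

lemma hbeU_harm (G : SimpleGraph V) (hlf : ∀ v : V, (G.neighborSet v).Finite)
    (B : Set V) (y x : V) (hx : x ∈ B) (hxy : x ≠ y) :
    ∑ z ∈ (hlf x).toFinset, (hbeU G B y x - hbeU G B y z) = 0 := by
  have h1 : hbeU G B y x = (vdeg G x : ℝ)⁻¹ * ∑ z ∈ (hlf x).toFinset, hbeU G B y z := by
    rw [hbeU, (hbe_summable G hlf B y x).tsum_eq_zero_add]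
    have h0 : firstHitP G B y 0 x = 0 := by
      rw [firstHitP, if_neg]; rintro ⟨h, _⟩; exact hxy h
    simp only [hbe_succ G hlf B y _ x hx hxy, h0, zero_add]
    rw [tsum_mul_left, Summable.tsum_finsetSum (fun z _ => hbe_summable G hlf B y z)]
    rfl
  rw [Finset.sum_sub_distrib, Finset.sum_const, hbe_card, nsmul_eq_mul]
  rcases Nat.eq_zero_or_pos (vdeg G x) with h | h
  · have : (hlf x).toFinset = ∅ := by
      rw [← Finset.card_eq_zero, hbe_card, h]
    rw [h, this]; simp
  · have : (vdeg G x : ℝ) ≠ 0 := by positivity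
    rw [h1]; field_simp; simp

/-- Laplacian restricted to a finite set -/
noncomputable def hbeL (G : SimpleGraph V) (F : Finset V) (u : V → ℝ) (x : V) : ℝ :=
  ∑ z ∈ F, if G.Adj x z then u x - u z else 0

/-- Dirichlet form restricted to a finite set -/
noncomputable def hbeD (G : SimpleGraph V) (F : Finset V) (u g : V → ℝ) : ℝ :=
  ∑ x ∈ F, ∑ z ∈ F, if G.Adj x z then (u x - u z) * (g x - g z) else 0

lemma hbe_green (G : SimpleGraph V) (F : Finset V) (u g : V → ℝ) :
    hbeD G F u g = 2 * ∑ x ∈ F, g x * hbeL G F u x := by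
  have h1 : ∑ x ∈ F, g x * hbeL G F u x
      = ∑ x ∈ F, ∑ z ∈ F, if G.Adj x z then (u x - u z) * g x else 0 := by
    refine Finset.sum_congr rfl fun x _ => ?_
    rw [hbeL, Finset.mul_sum]
    refine Finset.sum_congr rfl fun z _ => ?_
    split_ifs <;> ring
  have h2 : ∑ x ∈ F, g x * hbeL G F u x
      = ∑ x ∈ F, ∑ z ∈ F, if G.Adj x z then -((u x - u z) * g z) else 0 := by
    rw [h1, Finset.sum_comm]
    refine Finset.sum_congr rfl fun x _ => ?_
    refine Finset.sum_congr rfl fun z _ => ?_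
    simp only [G.adj_comm z x]
    split_ifs <;> ring
  rw [two_mul]
  nth_rewrite 1 [h1]
  rw [h2, hbeD, ← Finset.sum_add_distrib]
  refine Finset.sum_congr rfl fun x _ => ?_
  rw [← Finset.sum_add_distrib]
  refine Finset.sum_congr rfl fun z _ => ?_
  split_ifs <;> ring

lemma hbeL_eq (G : SimpleGraph V) (hlf : ∀ v : V, (G.neighborSet v).Finite)
    (F : Finset V) (u : V → ℝ) (x : V) (hF : ∀ z, G.Adj x z → z ∈ F) :
    hbeL G F u x = ∑ z ∈ (hlf x).toFinset, (u x - u z) := by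
  rw [hbeL, ← Finset.sum_filter]
  refine Finset.sum_congr ?_ fun _ _ => rfl
  ext z
  simp only [Finset.mem_filter, Set.Finite.mem_toFinset, SimpleGraph.mem_neighborSet]
  exact ⟨fun h => h.2, fun h => ⟨hF z h, h⟩⟩

lemma hbe_energy (G : SimpleGraph V) (F : Finset V) (f : V → ℝ) :
    ENNReal.ofReal (hbeD G F f f / 2) ≤ eEnergy G f := by
  have h : ENNReal.ofReal (hbeD G F f f) ≤
      ∑' e : {p : V × V // G.Adj p.1 p.2}, ENNReal.ofReal ((f e.val.1 - f e.val.2) ^ 2) := by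
    have e1 : hbeD G F f f =
        ∑ p ∈ F ×ˢ F, if G.Adj p.1 p.2 then (f p.1 - f p.2) ^ 2 else 0 := by
      rw [hbeD, Finset.sum_product]
      simp only [sq]
    rw [e1, ENNReal.ofReal_sum_of_nonneg]
    · refine (ENNReal.sum_le_tsum (F ×ˢ F)).trans (le_of_eq ?_)
      have := tsum_subtype {p : V × V | G.Adj p.1 p.2}
        (fun p => ENNReal.ofReal ((f p.1 - f p.2) ^ 2))
      refine Eq.trans ?_ this.symm
      refine tsum_congr fun p => ?_
      by_cases hp : G.Adj p.1 p.2
      · rw [if_pos hp, Set.indicator_of_mem (by exact hp)]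
      · rw [if_neg hp, Set.indicator_of_notMem (by exact hp), ENNReal.ofReal_zero]
    · intro p _
      split_ifs
      · positivity
      · exact le_rfl
  rw [eEnergy, div_eq_inv_mul, ENNReal.ofReal_mul (by norm_num)]
  rw [ENNReal.ofReal_inv_of_pos (by norm_num)]
  simp only [ENNReal.ofReal_ofNat]
  gcongr

lemma hbeD_nonneg (G : SimpleGraph V) (F : Finset V) (f : V → ℝ) : 0 ≤ hbeD G F f f := by
  refine Finset.sum_nonneg fun x _ => Finset.sum_nonneg fun z _ => ?_
  split_ifs
  · exact mul_self_nonneg _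
  · exact le_rfl

lemma hbe_sub (G : SimpleGraph V) (F : Finset V) (f u : V → ℝ) :
    hbeD G F (fun x => f x - u x) (fun x => f x - u x)
      = hbeD G F f f - 2 * hbeD G F u f + hbeD G F u u := by
  simp only [hbeD]
  rw [Finset.mul_sum, ← Finset.sum_sub_distrib, ← Finset.sum_add_distrib]
  refine Finset.sum_congr rfl fun x _ => ?_
  rw [Finset.mul_sum, ← Finset.sum_sub_distrib, ← Finset.sum_add_distrib]
  refine Finset.sum_congr rfl fun z _ => ?_
  split_ifs <;> ring

lemma hbe_cut (G : SimpleGraph V) (F : Finset V) (q : V → ℝ) (C : ℝ) (hC : 0 ≤ C) (v₀ : V)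
    (hq : ∀ x, 0 < q x → x ∈ F ∧ (∀ z, G.Adj x z → z ∈ F) ∧
      (x ≠ v₀ → hbeL G F q x = 0) ∧ (x = v₀ → hbeL G F q x = C))
    (a b : V) (hab : G.Adj a b) : max (q a) 0 - max (q b) 0 ≤ C := by
  by_cases hlt : max (q b) 0 < q a
  swap
  · have : max (q a) 0 ≤ max (q b) 0 := max_le (not_lt.1 hlt) (le_max_right _ _)
    linarith
  set t := max (q b) 0 with ht
  have ht0 : 0 ≤ t := le_max_right _ _
  have htb : q b ≤ t := le_max_left _ _
  have ha0 : 0 < q a := lt_of_le_of_lt ht0 hlt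
  rw [max_eq_left ha0.le]
  set g : V → ℝ := fun x => if t < q x then 1 else 0 with hg
  have hup : ∑ x ∈ F, g x * hbeL G F q x ≤ C := by
    have h1 : ∀ x ∈ F, g x * hbeL G F q x ≤ if x = v₀ then C else 0 := by
      intro x _
      by_cases hx : t < q x
      · obtain ⟨_, _, h3, h4⟩ := hq x (lt_of_le_of_lt ht0 hx)
        simp only [hg, if_pos hx, one_mul]
        by_cases hxv : x = v₀
        · rw [if_pos hxv, h4 hxv]
        · rw [if_neg hxv, h3 hxv]
      · simp only [hg, if_neg hx, zero_mul]
        split_ifs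
        · exact hC
        · exact le_rfl
    refine (Finset.sum_le_sum h1).trans ?_
    rw [Finset.sum_ite_eq']
    split_ifs
    · exact le_rfl
    · exact hC
  have hlow : 2 * (q a - q b) ≤ hbeD G F q g := by
    have haF := (hq a ha0).1
    have hbF := (hq a ha0).2.1 b hab
    have hga : g a = 1 := if_pos hlt
    have hgb : g b = 0 := if_neg (not_lt.2 htb)
    rw [hbeD, ← Finset.sum_product']
    have hsub : ({(a, b), (b, a)} : Finset (V × V)) ⊆ F ×ˢ F := by
      intro p hp
      simp only [Finset.mem_insert, Finset.mem_singleton] at hp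
      rcases hp with rfl | rfl <;> simp [haF, hbF]
    refine le_trans (le_of_eq ?_) (Finset.sum_le_sum_of_subset_of_nonneg hsub ?_)
    · have hne : (a, b) ≠ (b, a) := by
        intro h; exact hab.ne (Prod.ext_iff.1 h).1
      rw [Finset.sum_pair hne]
      simp only [hab, hab.symm, if_true, hga, hgb]
      ring
    · rintro ⟨x, z⟩ _ _
      simp only [hg]
      split_ifs with h1 h2 h3 h3
      · simp
      · have := not_lt.1 h3; nlinarith
      · have := not_lt.1 h2; nlinarith
      · simp
      · exact le_rfl
  rw [hbe_green] at hlow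
  linarith

lemma hbe_walk (G : SimpleGraph V) (f : V → ℝ) (C : ℝ)
    (h : ∀ a b, G.Adj a b → f a - f b ≤ C) {a b : V} (p : G.Walk a b) :
    f a - f b ≤ p.length * C := by
  induction p with
  | nil => simp
  | cons hab p ih =>
    have := h _ _ hab
    rw [SimpleGraph.Walk.length_cons]
    push_cast
    linarith

lemma hbe_core (G : SimpleGraph V)
    (hconn : G.Connected) (hlf : ∀ v : V, (G.neighborSet v).Finite)
    (v₀ y : V) (B : Set V) (hB : B.Finite) (hv : v₀ ∈ B) (hyB : y ∈ B) (hne : y ≠ v₀)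
    (c : ℝ) (hc : 0 < c)
    (hres : ENNReal.ofReal c ≤ effRes G {v₀} Bᶜ) :
    1 - hbeU G B v₀ y * hbeU G B y v₀ ≤ G.dist v₀ y * c⁻¹ := by
  set F : Finset V := (hB.union (hB.biUnion fun x _ => hlf x)).toFinset with hF
  have hBF : ∀ x ∈ B, x ∈ F := by
    intro x hx; rw [hF, Set.Finite.mem_toFinset]; exact Or.inl hx
  have hNF : ∀ x ∈ B, ∀ z, G.Adj x z → z ∈ F := by
    intro x hx z hz; rw [hF, Set.Finite.mem_toFinset]
    exact Or.inr (Set.mem_biUnion hx hz)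
  set u := hbeU G B v₀ with hu
  set w := hbeU G B y with hw
  have hLu : ∀ x ∈ B, x ≠ v₀ → hbeL G F u x = 0 := fun x hx hxv => by
    rw [hbeL_eq G hlf F u x (hNF x hx)]; exact hbeU_harm G hlf B v₀ x hx hxv
  have hLw : ∀ x ∈ B, x ≠ y → hbeL G F w x = 0 := fun x hx hxv => by
    rw [hbeL_eq G hlf F w x (hNF x hx)]; exact hbeU_harm G hlf B y x hx hxv
  have hu1 : u v₀ = 1 := hbeU_self G hlf B v₀ hv
  have hw1 : w y = 1 := hbeU_self G hlf B y hyB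
  have huoff : ∀ x, x ∉ B → u x = 0 := fun x hx => hbeU_off G B v₀ x hx
  have hwoff : ∀ x, x ∉ B → w x = 0 := fun x hx => hbeU_off G B y x hx
  set C := hbeL G F u v₀ with hC
  have hC0 : 0 ≤ C := by
    refine Finset.sum_nonneg fun z _ => ?_
    split_ifs
    · rw [hu1]; linarith [hbeU_le_one G hlf B v₀ z]
    · exact le_rfl
  have hgr : ∀ f : V → ℝ, f v₀ = 1 → (∀ x, x ∉ B → f x = 0) → hbeD G F u f = 2 * C := by
    intro f h1 h2
    rw [hbe_green, Finset.sum_eq_single v₀]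
    · rw [h1, one_mul]
    · intro x _ hx
      by_cases hxB : x ∈ B
      · rw [hLu x hxB hx, mul_zero]
      · rw [h2 x hxB, zero_mul]
    · intro h; exact absurd (hBF v₀ hv) h
  have hCc : C ≤ c⁻¹ := by
    have h1 : ENNReal.ofReal C ≤
        ⨅ f ∈ {f : V → ℝ | (∀ a ∈ ({v₀} : Set V), f a = 1) ∧ (∀ b ∈ Bᶜ, f b = 0)},
          eEnergy G f := by
      refine le_iInf₂ fun f hf => ?_
      refine le_trans (ENNReal.ofReal_le_ofReal ?_) (hbe_energy G F f)
      have e1 := hgr f (hf.1 v₀ rfl) (fun x hx => hf.2 x hx)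
      have e2 := hgr u hu1 huoff
      have e3 := hbeD_nonneg G F (fun x => f x - u x)
      rw [hbe_sub] at e3
      linarith
    rw [effRes] at hres
    have h2 := h1.trans (ENNReal.le_inv_iff_le_inv.1 hres)
    rw [← ENNReal.ofReal_inv_of_pos hc] at h2
    exact (ENNReal.ofReal_le_ofReal_iff (by positivity)).1 h2
  set q : V → ℝ := fun x => u x - u y * w x with hq
  have hLq : ∀ x, hbeL G F q x = hbeL G F u x - u y * hbeL G F w x := by
    intro x
    simp only [hbeL, hq]
    rw [Finset.mul_sum, ← Finset.sum_sub_distrib]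
    refine Finset.sum_congr rfl fun z _ => ?_
    split_ifs <;> ring
  have hqy : q y = 0 := by simp [hq, hw1]
  have hqpos : ∀ x, 0 < q x → x ∈ F ∧ (∀ z, G.Adj x z → z ∈ F) ∧
      (x ≠ v₀ → hbeL G F q x = 0) ∧ (x = v₀ → hbeL G F q x = C) := by
    intro x hx
    have hxB : x ∈ B := by
      by_contra h
      simp [hq, huoff x h, hwoff x h] at hx
    have hxy : x ≠ y := by
      rintro rfl; rw [hqy] at hx; exact lt_irrefl _ hx
    refine ⟨hBF x hxB, hNF x hxB, fun h => ?_, fun h => ?_⟩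
    · rw [hLq, hLu x hxB h, hLw x hxB hxy]; ring
    · rw [hLq, hLw x hxB hxy, h]; ring
  obtain ⟨p, hp⟩ := hconn.exists_walk_length_eq_dist v₀ y
  have hw2 := hbe_walk G (fun x => max (q x) 0) C
    (fun a b hab => hbe_cut G F q C hC0 v₀ hqpos a b hab) p
  simp only [hqy, max_self, sub_zero, hp] at hw2
  have h3 : q v₀ = 1 - u y * w v₀ := by simp [hq, hu1]
  calc 1 - u y * w v₀ = q v₀ := h3.symm
    _ ≤ max (q v₀) 0 := le_max_left _ _
    _ ≤ G.dist v₀ y * C := hw2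
    _ ≤ G.dist v₀ y * c⁻¹ := by gcongr

/-- hitting probability versus exit probability (Lemma 2.3 of the paper).
Let `λ ≥ 1`, suppose `Reff(0, B(0,R)ᶜ) ≥ R/λ`, and let `0 < ε ≤ 1/(2λ)`. Then for every
`y ∈ B(0,εR)`, the walk started at `y` hits `0` before exiting `B(0,R)` with probability at
least `1 − ελ/(1−ελ) ≥ 1 − 2ελ`, and the walk started at `0` hits `y` before exiting
`B(0,R)` with probability at least `1 − ελ`. -/
theorem hit_before_exit (G : SimpleGraph V) [Infinite V]
    (hconn : G.Connected) (hlf : ∀ v : V, (G.neighborSet v).Finite)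
    (v₀ : V) (R lam ε : ℝ) (hlam : 1 ≤ lam)
    (Bset : Set V) (hBset : Bset = {y : V | (G.dist v₀ y : ℝ) < R})
    (hres : ENNReal.ofReal (R / lam) ≤ effRes G {v₀} Bsetᶜ)
    (hε0 : 0 < ε) (hε : ε ≤ 1 / (2 * lam))
    (y : V) (hy : (G.dist v₀ y : ℝ) < ε * R) :
    (1 - ε * lam / (1 - ε * lam) ≤ ∑' k : ℕ, firstHitP G Bset v₀ k y) ∧
    (1 - 2 * ε * lam ≤ 1 - ε * lam / (1 - ε * lam)) ∧
    (1 - ε * lam ≤ ∑' k : ℕ, firstHitP G Bset y k v₀) := by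
  have hl0 : 0 < lam := by linarith
  have hel : ε * lam ≤ 1 / 2 := by
    rw [le_div_iff₀ (by positivity)] at hε
    linarith
  have hel0 : 0 < ε * lam := by positivity
  have hR : 0 < R := by
    have : 0 < ε * R := lt_of_le_of_lt (Nat.cast_nonneg _) hy
    exact pos_of_mul_pos_right this hε0.le
  have hε1 : ε ≤ 1 := by nlinarith
  have hdiv : ε * lam ≤ ε * lam / (1 - ε * lam) := by
    rw [le_div_iff₀ (by linarith)]; nlinarith
  have hmid : ε * lam / (1 - ε * lam) ≤ 2 * ε * lam := by
    rw [div_le_iff₀ (by linarith)]; nlinarith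
  have hvB : v₀ ∈ Bset := by rw [hBset]; simpa using hR
  have hyB : y ∈ Bset := by
    rw [hBset]; change (G.dist v₀ y : ℝ) < R
    nlinarith
  have hBfin : Bset.Finite := by
    refine (hbe_ball_finite G hconn hlf v₀ ⌈R⌉₊).subset ?_
    intro z hz
    rw [hBset] at hz
    change (G.dist v₀ z : ℝ) < R at hz
    change G.dist z v₀ ≤ _
    rw [SimpleGraph.dist_comm]
    exact_mod_cast hz.le.trans (Nat.le_ceil R)
  change (1 - ε * lam / (1 - ε * lam) ≤ hbeU G Bset v₀ y) ∧ _ ∧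
    (1 - ε * lam ≤ hbeU G Bset y v₀)
  by_cases hne : y = v₀
  · subst hne
    rw [hbeU_self G hlf Bset y hyB]
    refine ⟨?_, ?_, ?_⟩ <;> linarith
  · have hcore := hbe_core G hconn hlf v₀ y Bset hBfin hvB hyB hne (R / lam)
      (by positivity) hres
    have hb : (G.dist v₀ y : ℝ) * (R / lam)⁻¹ ≤ ε * lam := by
      rw [inv_div, ← mul_div_assoc, div_le_iff₀ hR]
      nlinarith
    have a1 := hbeU_nonneg G hlf Bset v₀ y
    have a2 := hbeU_le_one G hlf Bset v₀ y
    have b1 := hbeU_nonneg G hlf Bset y v₀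
    have b2 := hbeU_le_one G hlf Bset y v₀
    have c1 := mul_le_of_le_one_right a1 b2
    have c2 := mul_le_of_le_one_left b1 a2
    refine ⟨?_, ?_, ?_⟩ <;> linarith
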